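/- In the Coxeter group W of type E8, for all integers i1, i2, j1, j2, j3, j4 with −1 ≤ i1 < i2 ≤ 1 and −1 ≤ j1 < j2 < j3 < j4 ≤ 4, the identity x'_{6,i1} · x'_{5,i2} · x_{4,2} · x'_{5,3} · x4 · x'_{6,j1} · x'_{5,j2} · x_{4,j3} · x'_{5,j4} · x6 = x4 · x'_{6,i1} · x'_{5,i2} · x_{4,2} · x'_{5,3} · x4 · x'_{6,j1} · x'_{5,j2} · x_{4,j3} · x'_{5,j4} holds. -/

import Mathlib

/-- The descending product `x i * x (i-1) * ... * x j` (equal to `1` when `j > i`). -/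
def descProd {G : Type*} [Group G] (x : ℤ → G) (i j : ℤ) : G :=
  ((List.range (i + 1 - j).toNat).map (fun n => x (i - (n : ℤ)))).prod

/-- The product `x i * x (i-2) * x (i-3) * ... * x j`, with the conventions
`primProd x i (i-1) = x i` and `primProd x i j = 1` for `j ≥ i`. -/
def primProd {G : Type*} [Group G] (x : ℤ → G) (i j : ℤ) : G :=
  if i ≤ j then 1 else x i * descProd x (i - 2) j

theorem descProd_eq {G : Type*} [Group G] (x : ℤ → G) (i j : ℤ) : descProd x i j =
    ((List.range (i + 1 - j).toNat).map (fun n : ℕ => x (i - (n : ℤ)))).prod := by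
  unfold descProd
  congr 1
  simp [List.map_eq_flatMap, List.flatMap_assoc]

theorem descProd_step {G : Type*} [Group G] (x : ℤ → G) (i j k : ℤ) (h : j ≤ i) (hk : k = i - 1) :
    descProd x i j = x i * descProd x k j := by
  subst hk
  rw [descProd_eq, descProd_eq]
  have e : (i + 1 - j).toNat = (i - 1 + 1 - j).toNat + 1 := by omega
  rw [e, List.range_succ_eq_map, List.map_cons, List.prod_cons, List.map_map]
  simp only [Nat.cast_zero, sub_zero]
  congr 3
  funext n
  simp only [Function.comp, Nat.succ_eq_add_one]
  congr 1
  push_cast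
  ring

theorem descProd_comm {G : Type*} [Group G] (x : ℤ → G) (i j : ℤ) (a : G)
    (h : ∀ k, j ≤ k → k ≤ i → Commute a (x k)) : Commute a (descProd x i j) := by
  rw [descProd_eq]
  apply Commute.list_prod_right
  intro y hy
  simp only [List.mem_map, List.mem_range] at hy
  obtain ⟨n, hn, rfl⟩ := hy
  apply h <;> omega

theorem braid_comm {G : Type*} [Group G] {a b p : G} (h : a * b * a = b * a * b)
    (hp : Commute a p) : Commute b (a * (b * p * b) * a) := by
  unfold Commute SemiconjBy at *
  calc b * (a * (b * p * b) * a) = (b * a * b) * p * b * a := by group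
    _ = a * b * (a * p) * b * a := by rw [← h]; group
    _ = a * b * p * (a * b * a) := by rw [hp]; group
    _ = _ := by rw [h]; group

theorem semi_conj {G : Type*} [Group G] {a b u v : G} (h : Commute a b)
    (hs : SemiconjBy a u v) : SemiconjBy a (b * u * b) (b * v * b) :=
  (SemiconjBy.mul_right (SemiconjBy.mul_right h hs) h)

theorem semi_inv {G : Type*} [Group G] {a u v : G} (h : a * a = 1)
    (hs : SemiconjBy a u v) : SemiconjBy a v u := by
  have e : a⁻¹ = a := inv_eq_of_mul_eq_one_left h
  have := hs.inv_symm_left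
  rwa [e] at this

theorem semi_self {G : Type*} [Group G] {a : G} (u : G) (h : a * a = 1) :
    SemiconjBy a u (a * u * a) := by
  unfold SemiconjBy
  rw [mul_assoc, h, mul_one]

theorem semi_braid {G : Type*} [Group G] {a b : G} (h : a * a = 1)
    (hb : a * b * a = b * a * b) : SemiconjBy a b (b * a * b) := by
  rw [← hb]; exact semi_self b h

theorem E8_f1 (G : Type*) [Group G] (x : ℤ → G)
    (hsq : ∀ i : ℤ, (-1) ≤ i → i ≤ 6 → x i ^ 2 = 1)
    (hbraid : ∀ i : ℤ, (-1) ≤ i → i ≤ 3 → x (i+1) * x i * x (i+1) = x i * x (i+1) * x i)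
    (h53 : x 5 * x 3 * x 5 = x 3 * x 5 * x 3)
    (h64 : x 6 * x 4 * x 6 = x 4 * x 6 * x 4)
    (hcomm : ∀ i j : ℤ, (-1) ≤ j → j + 1 < i → i ≤ 4 → x i * x j = x j * x i)
    (hcomm5 : ∀ i : ℤ, (-1) ≤ i → i ≤ 6 → i ≠ 3 → i ≠ 5 → x 5 * x i = x i * x 5)
    (hcomm6 : ∀ i : ℤ, (-1) ≤ i → i ≤ 6 → i ≠ 4 → i ≠ 6 → x 6 * x i = x i * x 6) :
    ∀ i1 i2 j1 j2 j3 j4 : ℤ, -1 ≤ i1 → i1 < i2 → i2 ≤ 1 →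
      -1 ≤ j1 → j1 < j2 → j2 < j3 → j3 < j4 → j4 ≤ 4 →
      primProd x 6 i1 * primProd x 5 i2 * descProd x 4 2 * primProd x 5 3 * x 4 * primProd x 6 j1 *
        primProd x 5 j2 * descProd x 4 j3 * primProd x 5 j4 * x 6 =
      x 4 * primProd x 6 i1 * primProd x 5 i2 * descProd x 4 2 * primProd x 5 3 * x 4 *
        primProd x 6 j1 * primProd x 5 j2 * descProd x 4 j3 * primProd x 5 j4 := by
  intro i1 i2 j1 j2 j3 j4 hi1 hi12 hi2 hj1 hj12 hj23 hj34 hj4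
  have sq : ∀ i : ℤ, (-1) ≤ i → i ≤ 6 → x i * x i = 1 := fun i h h' => by
    rw [← pow_two]; exact hsq i h h'
  have s2 := sq 2 (by norm_num) (by norm_num)
  have s3 := sq 3 (by norm_num) (by norm_num)
  have s4 := sq 4 (by norm_num) (by norm_num)
  have s5 := sq 5 (by norm_num) (by norm_num)
  have s6 := sq 6 (by norm_num) (by norm_num)
  have b23 : x 3 * x 2 * x 3 = x 2 * x 3 * x 2 := by
    simpa using hbraid 2 (by norm_num) (by norm_num)
  have b34 : x 4 * x 3 * x 4 = x 3 * x 4 * x 3 := by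
    simpa using hbraid 3 (by norm_num) (by norm_num)
  have cc : ∀ i j : ℤ, (-1) ≤ j → j + 1 < i → i ≤ 4 → Commute (x i) (x j) := hcomm
  have c5 : ∀ i : ℤ, (-1) ≤ i → i ≤ 6 → i ≠ 3 → Commute (x 5) (x i) := fun i h h' h3 => by
    by_cases h5 : i = 5
    · subst h5; exact Commute.refl _
    · exact hcomm5 i h h' h3 h5
  have c6 : ∀ i : ℤ, (-1) ≤ i → i ≤ 6 → i ≠ 4 → Commute (x 6) (x i) := fun i h h' h3 => by
    by_cases h5 : i = 6
    · subst h5; exact Commute.refl _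
    · exact hcomm6 i h h' h3 h5
  have c24 : Commute (x 2) (x 4) := (cc 4 2 (by norm_num) (by norm_num) (by norm_num)).symm
  have c26 : Commute (x 2) (x 6) := (c6 2 (by norm_num) (by norm_num) (by norm_num)).symm
  have c36 : Commute (x 3) (x 6) := (c6 3 (by norm_num) (by norm_num) (by norm_num)).symm
  have c56 : Commute (x 5) (x 6) := (c6 5 (by norm_num) (by norm_num) (by norm_num)).symm
  have c54 : Commute (x 5) (x 4) := c5 4 (by norm_num) (by norm_num) (by norm_num)
  have c52 : Commute (x 5) (x 2) := c5 2 (by norm_num) (by norm_num) (by norm_num)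
  obtain ⟨p, hp⟩ : ∃ p, p = x 2 * (x 5 * x 3 * x 5) * x 2 := ⟨_, rfl⟩
  have k3 : Commute (x 3) p := by
    rw [hp, h53]; exact braid_comm b23.symm c52.symm
  have k4 : Commute (x 4) (x 3 * (x 4 * p * x 4) * x 3) := braid_comm b34.symm k3
  have k6 : Commute (x 6) (x 4 * (x 6 * (x 3 * (x 4 * p * x 4) * x 3) * x 6) * x 4) :=
    braid_comm h64.symm k4
  -- the chain of reflections
  have t1 : SemiconjBy (x 4) (x 6) (x 6 * x 4 * x 6) := semi_braid s4 h64.symm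
  have t2 : SemiconjBy (x 3) (x 6 * x 4 * x 6) (x 6 * (x 4 * x 3 * x 4) * x 6) :=
    semi_conj c36 (semi_braid s3 b34.symm)
  have t3 : SemiconjBy (x 5) (x 6 * (x 4 * x 3 * x 4) * x 6)
      (x 6 * (x 4 * (x 5 * x 3 * x 5) * x 4) * x 6) :=
    semi_conj c56 (semi_conj c54 (semi_self _ s5))
  have t4 : SemiconjBy (x 2) (x 6 * (x 4 * (x 5 * x 3 * x 5) * x 4) * x 6)
      (x 6 * (x 4 * p * x 4) * x 6) := by
    rw [hp]; exact semi_conj c26 (semi_conj c24 (semi_self _ s2))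
  have t5 : SemiconjBy (x 3) (x 6 * (x 4 * p * x 4) * x 6)
      (x 6 * (x 3 * (x 4 * p * x 4) * x 3) * x 6) := semi_conj c36 (semi_self _ s3)
  have t6 : SemiconjBy (x 4) (x 6 * (x 3 * (x 4 * p * x 4) * x 3) * x 6)
      (x 4 * (x 6 * (x 3 * (x 4 * p * x 4) * x 3) * x 6) * x 4) := semi_self _ s4
  have t7 : SemiconjBy (x 2) (x 6 * (x 4 * x 3 * x 4) * x 6)
      (x 6 * (x 4 * (x 2 * x 3 * x 2) * x 4) * x 6) :=
    semi_conj c26 (semi_conj c24 (semi_self _ s2))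
  have t8 : SemiconjBy (x 5) (x 6 * (x 4 * (x 2 * x 3 * x 2) * x 4) * x 6)
      (x 6 * (x 4 * p * x 4) * x 6) := by
    rw [hp]; exact semi_conj c56 (semi_conj c54 (semi_conj c52 (semi_self _ s5)))
  have t9 : SemiconjBy (x 6) (x 6 * x 4 * x 6) (x 4) := by
    have := semi_inv s6 (semi_self (x 4) s6); exact this
  -- the tails
  have low : ∀ k : ℤ, -1 ≤ k → k ≤ 1 → Commute (x 3) (x k) ∧ Commute (x 4) (x k) ∧
      Commute (x 5) (x k) ∧ Commute (x 6) (x k) := fun k h h' =>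
    ⟨cc 3 k h (by omega) (by omega), cc 4 k h (by omega) (by omega),
      c5 k h (by omega) (by omega), c6 k h (by omega) (by omega)⟩
  have d6 : ∀ i j : ℤ, -1 ≤ j → i ≤ 3 → Commute (x 6) (descProd x i j) := fun i j hj hi =>
    descProd_comm x i j _ fun k h h' => c6 k (by omega) (by omega) (by omega)
  have d4 : ∀ i j : ℤ, -1 ≤ j → i ≤ 2 → Commute (x 4) (descProd x i j) := fun i j hj hi =>
    descProd_comm x i j _ fun k h h' => cc 4 k (by omega) (by omega) (by omega)
  have d3 : ∀ i j : ℤ, -1 ≤ j → i ≤ 1 → Commute (x 3) (descProd x i j) := fun i j hj hi =>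
    descProd_comm x i j _ fun k h h' => cc 3 k (by omega) (by omega) (by omega)
  have d5 : ∀ i j : ℤ, -1 ≤ j → i ≤ 2 → Commute (x 5) (descProd x i j) := fun i j hj hi =>
    descProd_comm x i j _ fun k h h' => c5 k (by omega) (by omega) (by omega)
  have f46 : ∀ a : G, Commute a (x 4) → Commute a (x 6) → Commute a (x 6 * x 4 * x 6) :=
    fun a h h' => semi_conj h' h
  have D : Commute (primProd x 5 j4) (x 6) := by
    rw [primProd, if_neg (by omega)]
    exact Commute.mul_left c56 (d6 _ _ (by omega) (by omega)).symm
  have C : SemiconjBy (descProd x 4 j3) (x 6) (x 6 * x 4 * x 6) := by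
    rw [descProd_step x 4 j3 3 (by omega) (by norm_num)]
    exact t1.mul_left (d6 _ _ (by omega) (by omega)).symm
  have B : SemiconjBy (primProd x 5 j2) (x 6 * x 4 * x 6)
      (x 6 * (x 4 * (x 5 * x 3 * x 5) * x 4) * x 6) := by
    rw [primProd, if_neg (by omega), descProd_step x (5 - 2) j2 2 (by omega) (by norm_num)]
    exact t3.mul_left (t2.mul_left (f46 _ (d4 _ _ (by omega) (by omega)).symm
      (d6 _ _ (by omega) (by omega)).symm))
  have A : SemiconjBy (primProd x 6 j1) (x 6 * (x 4 * (x 5 * x 3 * x 5) * x 4) * x 6)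
      (x 4 * (x 6 * (x 3 * (x 4 * p * x 4) * x 3) * x 6) * x 4) := by
    rw [primProd, if_neg (by omega), descProd_step x (6 - 2) j1 3 (by omega) (by norm_num),
      descProd_step x 3 j1 2 (by omega) (by norm_num),
      descProd_step x 2 j1 1 (by omega) (by norm_num)]
    have e3 := (d3 1 j1 (by omega) (by omega)).symm
    have e4 := (d4 1 j1 (by omega) (by omega)).symm
    have e5 := (d5 1 j1 (by omega) (by omega)).symm
    have e6 := (d6 1 j1 (by omega) (by omega)).symm
    exact SemiconjBy.mul_left k6 (t6.mul_left (t5.mul_left (t4.mul_left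
      (semi_conj e6 (semi_conj e4 (semi_conj e5 e3))))))
  have E : SemiconjBy (primProd x 5 3) (x 6 * (x 3 * (x 4 * p * x 4) * x 3) * x 6)
      (x 6 * (x 4 * (x 2 * x 3 * x 2) * x 4) * x 6) := by
    rw [primProd, if_neg (by omega), descProd_step x (5 - 2) 3 2 (by omega) (by norm_num)]
    have : descProd x 2 3 = 1 := by simp [descProd]
    rw [this, mul_one]
    exact (semi_inv s5 t8).mul_left (semi_inv s3 t5)
  have F : SemiconjBy (descProd x 4 2) (x 6 * (x 4 * (x 2 * x 3 * x 2) * x 4) * x 6) (x 6) := by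
    rw [descProd_step x 4 2 3 (by omega) (by norm_num),
      descProd_step x 3 2 2 (by omega) (by norm_num),
      descProd_step x 2 2 1 (by omega) (by norm_num)]
    have : descProd x 1 2 = 1 := by simp [descProd]
    rw [this, mul_one]
    exact (semi_inv s4 t1).mul_left ((semi_inv s3 t2).mul_left (semi_inv s2 t7))
  have H : Commute (primProd x 5 i2) (x 6) := by
    rw [primProd, if_neg (by omega)]
    exact Commute.mul_left c56 (d6 _ _ (by omega) (by omega)).symm
  have I : SemiconjBy (primProd x 6 i1) (x 6) (x 4) := by
    rw [primProd, if_neg (by omega), descProd_step x (6 - 2) i1 3 (by omega) (by norm_num)]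
    exact t9.mul_left (t1.mul_left (d6 _ _ (by omega) (by omega)).symm)
  have fin := ((((((((I.mul_left H).mul_left F).mul_left E).mul_left (semi_inv s4 t6)).mul_left
    A).mul_left B).mul_left C).mul_left D)
  rw [fin.eq]
  simp only [mul_assoc]
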